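/- Let T ∈ S′(ℝ^d) be a tempered distribution, x ∈ ℝ^d, and φ in the Schwartz space S(ℝ^d). Then the family (T(h_γ) · ∫_{ℝ^d} h_γ(y) φ(y+x) dy)_{γ∈ℕ^d} is absolutely summable, and Σ_{γ∈ℕ^d} T(h_γ) ∫_{ℝ^d} h_γ(y) φ(y+x) dy = T(τ_{−x} φ), where τ_{−x} φ(y) = φ(y+x). (This expresses that the Hermite regularization of T commutes with translation up to association.) -/

import Mathlib

open MeasureTheory

noncomputable def hermitePoly (n : ℕ) (x : ℝ) : ℝ :=
  (-1 : ℝ) ^ n * Real.exp (x ^ 2 / 2) *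
    iteratedDeriv n (fun y : ℝ => Real.exp (-(y ^ 2 / 2))) x

noncomputable def hermiteFun (n : ℕ) (x : ℝ) : ℝ :=
  (Real.sqrt (Real.sqrt (2 * Real.pi) * n.factorial))⁻¹ *
    Real.exp (-(x ^ 2 / 4)) * hermitePoly n x

noncomputable def hermiteFunMulti (d : ℕ) (α : Fin d → ℕ) (x : EuclideanSpace ℝ (Fin d)) : ℝ :=
  ∏ i, hermiteFun (α i) (x i)

/-! ### One-dimensional ladder relations -/

lemma hermiteFun_eq (n : ℕ) (x : ℝ) : hermiteFun n x =
    (Real.sqrt (Real.sqrt (2 * Real.pi) * n.factorial))⁻¹ *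
    (Real.exp (-(x ^ 2 / 4)) * Polynomial.aeval x (Polynomial.hermite n)) := by
  unfold hermiteFun hermitePoly
  rw [iteratedDeriv_eq_iterate, Polynomial.hermite_eq_deriv_gaussian']
  ring

lemma derivative_hermite_aux (n : ℕ) :
    Polynomial.derivative (Polynomial.hermite (n + 1)) =
      (n + 1 : Polynomial ℤ) * Polynomial.hermite n := by
  induction n with
  | zero => simp
  | succ n ih =>
    rw [Polynomial.hermite_succ (n + 1)]
    rw [Polynomial.derivative_sub, Polynomial.derivative_mul, ih]
    simp only [Polynomial.derivative_X, Polynomial.derivative_mul]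
    have : Polynomial.derivative ((n : Polynomial ℤ) + 1) = 0 := by simp
    rw [this, Polynomial.hermite_succ n]
    push_cast
    ring

/-- normalisation constant -/
noncomputable def hcst (n : ℕ) : ℝ := (Real.sqrt (Real.sqrt (2 * Real.pi) * n.factorial))⁻¹

lemma hcst_succ (n : ℕ) : hcst n = Real.sqrt (n + 1) * hcst (n + 1) := by
  unfold hcst
  have h1 : (0 : ℝ) < Real.sqrt (2 * Real.pi) := Real.sqrt_pos.2 (by positivity)
  have h2 : (0 : ℝ) < Real.sqrt (n + 1) := Real.sqrt_pos.2 (by positivity)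
  rw [Nat.factorial_succ]
  push_cast
  rw [show Real.sqrt (2 * Real.pi) * (((n : ℝ) + 1) * n.factorial)
    = ((n : ℝ) + 1) * (Real.sqrt (2 * Real.pi) * n.factorial) by ring,
    Real.sqrt_mul (by positivity) (Real.sqrt (2 * Real.pi) * _), mul_inv, ← mul_assoc, mul_inv_cancel₀ h2.ne', one_mul]

lemma hermiteFun_rec (n : ℕ) (x : ℝ) : x * hermiteFun n x =
    Real.sqrt (n + 1) * hermiteFun (n + 1) x + Real.sqrt n * hermiteFun (n - 1) x := by
  simp only [hermiteFun_eq]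
  change x * (hcst n * _) = Real.sqrt (n + 1) * (hcst (n + 1) * _) + Real.sqrt n * (hcst (n - 1) * _)
  rcases n with _ | n
  · rw [hcst_succ 0]; simp; ring
  · rw [Polynomial.hermite_succ (n + 1), derivative_hermite_aux]
    simp only [Nat.add_sub_cancel, map_sub, map_mul, Polynomial.aeval_X, map_add, map_one,
      map_natCast]
    rw [hcst_succ n, hcst_succ (n + 1)]
    have : Real.sqrt (n + 1) * Real.sqrt (n + 1) = n + 1 := Real.mul_self_sqrt (by positivity)
    push_cast
    linear_combination (-(Real.exp (-(x ^ 2 / 4)) * (Polynomial.aeval x) (Polynomial.hermite n)) *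
      Real.sqrt (n + 1 + 1) * hcst (n + 1 + 1)) * this

lemma hermiteFun_hasDerivAt' (n : ℕ) (x : ℝ) : HasDerivAt (hermiteFun n)
    (x / 2 * hermiteFun n x - Real.sqrt (n + 1) * hermiteFun (n + 1) x) x := by
  have h0 : hermiteFun n = fun x => hcst n *
    (Real.exp (-(x ^ 2 / 4)) * Polynomial.aeval x (Polynomial.hermite n)) := by
    funext x; exact hermiteFun_eq n x
  have h1 : HasDerivAt (fun x : ℝ => Real.exp (-(x ^ 2 / 4)))
      (Real.exp (-(x ^ 2 / 4)) * (-(2 * x / 4))) x := by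
    have := ((hasDerivAt_pow 2 x).div_const 4).neg.exp
    simpa using this
  have h2 := (h1.mul (Polynomial.hasDerivAt_aeval (Polynomial.hermite n) x)).const_mul (hcst n)
  rw [h0]
  refine h2.congr_deriv ?_
  rw [hermiteFun_eq (n + 1)]
  change _ = _ - Real.sqrt (n + 1) * (hcst (n + 1) * _)
  rw [hcst_succ n, Polynomial.hermite_succ]
  simp only [map_sub, map_mul, Polynomial.aeval_X]
  ring

lemma hermiteFun_hasDerivAt (n : ℕ) (x : ℝ) : HasDerivAt (hermiteFun n)
    ((Real.sqrt n * hermiteFun (n - 1) x - Real.sqrt (n + 1) * hermiteFun (n + 1) x) / 2) x := by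
  refine (hermiteFun_hasDerivAt' n x).congr_deriv ?_
  linear_combination (1 / 2) * hermiteFun_rec n x

lemma hermiteFun_continuous (n : ℕ) : Continuous (hermiteFun n) :=
  continuous_iff_continuousAt.2 fun x => (hermiteFun_hasDerivAt n x).continuousAt

lemma hermiteFun_zero (x : ℝ) : hermiteFun 0 x = hcst 0 * Real.exp (-(x ^ 2 / 4)) := by
  rw [hermiteFun_eq]; simp [hcst]

lemma hcst_zero_pos : 0 < hcst 0 := by
  unfold hcst; positivity

lemma hermiteFun_decay (n : ℕ) : ∀ k : ℕ, ∃ C, ∀ x : ℝ, |x| ^ k * |hermiteFun n x| ≤ C := by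
  induction n using Nat.strong_induction_on with
  | _ n ih =>
  intro k
  rcases n with _ | n
  · refine ⟨hcst 0 * (k.factorial * Real.exp 1), fun x => ?_⟩
    rw [hermiteFun_zero, abs_mul, abs_of_pos hcst_zero_pos, Real.abs_exp]
    have h1 : |x| ^ k ≤ k.factorial * Real.exp |x| := by
      have := Real.pow_div_factorial_le_exp |x| (abs_nonneg x) k
      rwa [div_le_iff₀ (by positivity), mul_comm] at this
    have h2 : Real.exp |x| * Real.exp (-(x ^ 2 / 4)) ≤ Real.exp 1 := by
      rw [← Real.exp_add]
      apply Real.exp_le_exp.2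
      nlinarith [sq_abs x, sq_nonneg (|x| - 2)]
    calc |x| ^ k * (hcst 0 * Real.exp (-(x ^ 2 / 4)))
        = hcst 0 * (|x| ^ k * Real.exp (-(x ^ 2 / 4))) := by ring
      _ ≤ hcst 0 * ((k.factorial * Real.exp |x|) * Real.exp (-(x ^ 2 / 4))) := by
          have := hcst_zero_pos.le
          gcongr
      _ = hcst 0 * (k.factorial * (Real.exp |x| * Real.exp (-(x ^ 2 / 4)))) := by ring
      _ ≤ _ := by
          have := hcst_zero_pos.le
          gcongr
  · obtain ⟨C1, h1⟩ := ih n (by omega) (k + 1)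
    obtain ⟨C2, h2⟩ := ih (n - 1) (by omega) k
    have hs : 0 < Real.sqrt (n + 1) := Real.sqrt_pos.2 (by positivity)
    refine ⟨(C1 + Real.sqrt n * C2) / Real.sqrt (n + 1), fun x => ?_⟩
    rw [le_div_iff₀ hs]
    have hr : Real.sqrt (n + 1) * hermiteFun (n + 1) x
      = x * hermiteFun n x - Real.sqrt n * hermiteFun (n - 1) x := by
      rw [hermiteFun_rec]; ring
    calc |x| ^ k * |hermiteFun (n + 1) x| * Real.sqrt (n + 1)
        = |x| ^ k * |Real.sqrt (n + 1) * hermiteFun (n + 1) x| := by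
          rw [abs_mul, abs_of_pos hs]; ring
      _ ≤ |x| ^ k * (|x * hermiteFun n x| + |Real.sqrt n * hermiteFun (n - 1) x|) := by
          rw [hr]; gcongr; exact abs_sub _ _
      _ = |x| ^ (k + 1) * |hermiteFun n x| + Real.sqrt n * (|x| ^ k * |hermiteFun (n - 1) x|) := by
          rw [abs_mul, abs_mul, abs_of_nonneg (Real.sqrt_nonneg _)]; ring
      _ ≤ _ := by
          gcongr
          · exact h1 x
          · exact h2 x

lemma hermiteFun_mul_integrable (m n : ℕ) :
    Integrable (fun x => hermiteFun m x * hermiteFun n x) := by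
  obtain ⟨A, hA⟩ := hermiteFun_decay m 0
  obtain ⟨B, hB⟩ := hermiteFun_decay n 0
  obtain ⟨B', hB'⟩ := hermiteFun_decay n 2
  refine Integrable.mono' (integrable_inv_one_add_sq.const_mul (A * (B + B')))
    ((hermiteFun_continuous m).mul (hermiteFun_continuous n)).aestronglyMeasurable
    (Filter.Eventually.of_forall fun x => ?_)
  have h1 := hA x
  have h2 := hB x
  have h3 := hB' x
  rw [pow_zero, one_mul] at h1 h2
  rw [Real.norm_eq_abs, abs_mul, ← div_eq_mul_inv, le_div_iff₀ (by positivity)]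
  have hA0 : 0 ≤ A := (abs_nonneg _).trans h1
  rw [mul_assoc]
  refine mul_le_mul h1 ?_ (by positivity) hA0
  rw [sq_abs] at h3
  linarith

/-- inner product of one-dimensional Hermite functions -/
noncomputable def hip (m n : ℕ) : ℝ := ∫ x, hermiteFun m x * hermiteFun n x

lemma hip_comm (m n : ℕ) : hip m n = hip n m := by
  unfold hip; simp_rw [mul_comm]

/-- integration by parts and recursion -/
lemma hip_ladder (m n : ℕ) :
    Real.sqrt (m + 1) * hip (m + 1) n = Real.sqrt n * hip m (n - 1) := by
  have ibp := integral_mul_deriv_eq_deriv_mul_of_integrable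
    (fun x _ => hermiteFun_hasDerivAt m x) (fun x _ => hermiteFun_hasDerivAt n x)
    (by
      have := (((hermiteFun_mul_integrable m (n - 1)).const_mul (Real.sqrt n)).sub
        ((hermiteFun_mul_integrable m (n + 1)).const_mul (Real.sqrt (n + 1)))).div_const 2
      refine this.congr (Filter.Eventually.of_forall fun x => ?_)
      simp; ring)
    (by
      have := (((hermiteFun_mul_integrable (m - 1) n).const_mul (Real.sqrt m)).sub
        ((hermiteFun_mul_integrable (m + 1) n).const_mul (Real.sqrt (m + 1)))).div_const 2
      refine this.congr (Filter.Eventually.of_forall fun x => ?_)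
      simp; ring)
    (hermiteFun_mul_integrable m n)
  have e1 : (∫ x, hermiteFun m x * ((Real.sqrt n * hermiteFun (n - 1) x
      - Real.sqrt (n + 1) * hermiteFun (n + 1) x) / 2)) =
      (Real.sqrt n * hip m (n - 1) - Real.sqrt (n + 1) * hip m (n + 1)) / 2 := by
    unfold hip
    rw [← integral_const_mul, ← integral_const_mul, ← integral_sub, ← integral_div]
    · congr 1; funext x; ring
    · exact (hermiteFun_mul_integrable _ _).const_mul _
    · exact (hermiteFun_mul_integrable _ _).const_mul _
  have e2 : (∫ x, ((Real.sqrt m * hermiteFun (m - 1) x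
      - Real.sqrt (m + 1) * hermiteFun (m + 1) x) / 2) * hermiteFun n x) =
      (Real.sqrt m * hip (m - 1) n - Real.sqrt (m + 1) * hip (m + 1) n) / 2 := by
    unfold hip
    rw [← integral_const_mul, ← integral_const_mul, ← integral_sub, ← integral_div]
    · congr 1; funext x; ring
    · exact (hermiteFun_mul_integrable _ _).const_mul _
    · exact (hermiteFun_mul_integrable _ _).const_mul _
  rw [e1, e2] at ibp
  have e3 : Real.sqrt (m + 1) * hip (m + 1) n + Real.sqrt m * hip (m - 1) n =
      Real.sqrt (n + 1) * hip m (n + 1) + Real.sqrt n * hip m (n - 1) := by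
    unfold hip
    rw [← integral_const_mul, ← integral_const_mul, ← integral_const_mul, ← integral_const_mul,
      ← integral_add, ← integral_add]
    · congr 1; funext x
      linear_combination hermiteFun m x * hermiteFun_rec n x - hermiteFun n x * hermiteFun_rec m x
    all_goals exact (hermiteFun_mul_integrable _ _).const_mul _
  linarith

lemma hip_zero_zero : hip 0 0 = 1 := by
  unfold hip
  have : ∀ x, hermiteFun 0 x * hermiteFun 0 x = (Real.sqrt (2 * Real.pi))⁻¹ *
      Real.exp (-(1 / 2) * x ^ 2) := by
    intro x
    rw [hermiteFun_zero]
    have h1 : hcst 0 * hcst 0 = (Real.sqrt (2 * Real.pi))⁻¹ := by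
      unfold hcst
      rw [← mul_inv, Real.mul_self_sqrt (by positivity)]; simp
    rw [mul_mul_mul_comm, h1, ← Real.exp_add]
    congr 2; ring
  simp_rw [this]
  rw [integral_const_mul, integral_gaussian]
  rw [show Real.pi / (1 / 2) = 2 * Real.pi by ring]
  exact inv_mul_cancel₀ (by positivity)

lemma hip_eq (m n : ℕ) : hip m n = if m = n then 1 else 0 := by
  induction m generalizing n with
  | zero =>
    rcases n with _ | n
    · simpa using hip_zero_zero
    · have := hip_ladder n 0
      have hs : Real.sqrt (n + 1) ≠ 0 := (Real.sqrt_pos.2 (by positivity)).ne'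
      rw [hip_comm]
      simpa [hs] using this
  | succ m ih =>
    have := hip_ladder m n
    have hs : Real.sqrt (m + 1) ≠ 0 := (Real.sqrt_pos.2 (by positivity)).ne'
    rcases n with _ | n
    · simpa [hs] using this
    · rw [Nat.add_sub_cancel, ih] at this
      by_cases hmn : m = n
      · subst hmn
        simp only [if_true, mul_one] at this ⊢
        push_cast at this
        exact mul_left_cancel₀ hs (by rw [this, mul_one])
      · simp only [hmn, if_false, mul_zero] at this
        simpa [hs, hmn] using this

lemma hermiteFun_tendsto (n : ℕ) : Filter.Tendsto (hermiteFun n) Filter.atBot (nhds 0) := by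
  obtain ⟨C, hC⟩ := hermiteFun_decay n 1
  have h1 : Filter.Tendsto (fun x : ℝ => C / |x|) Filter.atBot (nhds 0) :=
    Filter.Tendsto.const_div_atTop Filter.tendsto_abs_atBot_atTop C
  refine squeeze_zero_norm' ?_ h1
  filter_upwards [Filter.eventually_lt_atBot 0] with x hx
  rw [le_div_iff₀ (abs_pos.2 hx.ne), mul_comm]
  simpa using hC x

lemma hermiteFun_sup (n : ℕ) (x : ℝ) : |hermiteFun n x| ≤ 2 * ((n : ℝ) + 1) := by
  set g : ℝ → ℝ := fun x =>
    (Real.sqrt n * hermiteFun (n - 1) x - Real.sqrt (n + 1) * hermiteFun (n + 1) x) / 2 with hg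
  have hd : ∀ y, HasDerivAt (fun y => hermiteFun n y * hermiteFun n y)
      (2 * (hermiteFun n y * g y)) y := fun y =>
    ((hermiteFun_hasDerivAt n y).mul (hermiteFun_hasDerivAt n y)).congr_deriv (by rw [hg]; ring)
  have ii := hermiteFun_mul_integrable
  have hi : Integrable (fun y => 2 * (hermiteFun n y * g y)) := by
    have := (((ii n (n - 1)).const_mul (Real.sqrt n)).sub
        ((ii n (n + 1)).const_mul (Real.sqrt (n + 1))))
    refine this.congr (Filter.Eventually.of_forall fun x => ?_)
    simp [hg]; ring
  have key := integral_Iic_of_hasDerivAt_of_tendsto' (a := x) (fun y _ => hd y) hi.integrableOn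
    (m := 0) (by simpa using (hermiteFun_tendsto n).mul (hermiteFun_tendsto n))
  rw [sub_zero] at key
  set B : ℝ → ℝ := fun y => hermiteFun n y * hermiteFun n y +
    (n * (hermiteFun (n - 1) y * hermiteFun (n - 1) y) +
    (n + 1) * (hermiteFun (n + 1) y * hermiteFun (n + 1) y)) / 2 with hB
  have hBi : Integrable B := (ii n n).add ((((ii _ _).const_mul _).add ((ii _ _).const_mul _)).div_const 2)
  have hBint : ∫ y, B y = 1 + (n + (n + 1)) / 2 := by
    have h1 : ∀ k, (∫ y, hermiteFun k y * hermiteFun k y) = 1 := fun k => by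
      have := hip_eq k k
      rw [if_pos rfl] at this
      exact this
    have j1 : Integrable (fun y => (n : ℝ) * (hermiteFun (n - 1) y * hermiteFun (n - 1) y)) :=
      (ii _ _).const_mul _
    have j2 : Integrable (fun y => ((n : ℝ) + 1) * (hermiteFun (n + 1) y * hermiteFun (n + 1) y)) :=
      (ii _ _).const_mul _
    have j3 : Integrable (fun y => ((n : ℝ) * (hermiteFun (n - 1) y * hermiteFun (n - 1) y) +
      ((n : ℝ) + 1) * (hermiteFun (n + 1) y * hermiteFun (n + 1) y)) / 2) :=
      (j1.add j2).div_const 2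
    rw [hB, integral_add (ii n n) j3,
      integral_div, integral_add j1 j2,
      integral_const_mul, integral_const_mul, h1, h1, h1, mul_one, mul_one]
  have hle : ∀ y, 2 * (hermiteFun n y * g y) ≤ B y := by
    intro y
    have s1 : Real.sqrt n * Real.sqrt n = n := Real.mul_self_sqrt (by positivity)
    have s2 : Real.sqrt (n + 1) * Real.sqrt (n + 1) = n + 1 := Real.mul_self_sqrt (by positivity)
    have : n * (hermiteFun (n - 1) y * hermiteFun (n - 1) y) = (Real.sqrt n * hermiteFun (n - 1) y) ^ 2 := by
      rw [mul_pow, sq (Real.sqrt _), s1]; ring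
    have h' : (n + 1) * (hermiteFun (n + 1) y * hermiteFun (n + 1) y)
        = (Real.sqrt (n + 1) * hermiteFun (n + 1) y) ^ 2 := by
      rw [mul_pow, sq (Real.sqrt _), s2]; ring
    simp only [hB, hg, this, h']
    generalize Real.sqrt n * hermiteFun (n - 1) y = a
    generalize Real.sqrt (n + 1) * hermiteFun (n + 1) y = b
    generalize hermiteFun n y = c
    nlinarith [sq_nonneg (c - (a - b) / 2), sq_nonneg (a + b)]
  have hB0 : ∀ y, 0 ≤ B y := fun y => by
    have := mul_self_nonneg (hermiteFun n y)
    have := mul_self_nonneg (hermiteFun (n - 1) y)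
    have := mul_self_nonneg (hermiteFun (n + 1) y)
    simp only [hB]; positivity
  have h3 : hermiteFun n x * hermiteFun n x ≤ 1 + (n + (n + 1)) / 2 := by
    rw [← key, ← hBint]
    calc _ ≤ ∫ y in Set.Iic x, B y := setIntegral_mono hi.integrableOn hBi.integrableOn hle
      _ ≤ _ := setIntegral_le_integral hBi (Filter.Eventually.of_forall hB0)
  have hn : (0 : ℝ) ≤ n := Nat.cast_nonneg n
  refine abs_le_of_sq_le_sq ?_ (by positivity)
  nlinarith


/-! ### Multi-dimensional ladder relations -/

/-- raise the `i`-th index -/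
def upIdx {d : ℕ} (γ : Fin d → ℕ) (i : Fin d) : Fin d → ℕ := Function.update γ i (γ i + 1)

/-- lower the `i`-th index -/
def dnIdx {d : ℕ} (γ : Fin d → ℕ) (i : Fin d) : Fin d → ℕ := Function.update γ i (γ i - 1)

lemma hermiteFunMulti_update (d : ℕ) (γ : Fin d → ℕ) (i : Fin d) (n : ℕ)
    (x : EuclideanSpace ℝ (Fin d)) :
    hermiteFunMulti d (Function.update γ i n) x =
      hermiteFun n (x i) * ∏ j ∈ Finset.univ.erase i, hermiteFun (γ j) (x j) := by
  unfold hermiteFunMulti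
  rw [← Finset.mul_prod_erase Finset.univ _ (Finset.mem_univ i), Function.update_self]
  congr 1
  refine Finset.prod_congr rfl fun j hj => ?_
  rw [Function.update_of_ne (Finset.ne_of_mem_erase hj)]

lemma hermiteFunMulti_split (d : ℕ) (γ : Fin d → ℕ) (i : Fin d)
    (x : EuclideanSpace ℝ (Fin d)) :
    hermiteFunMulti d γ x =
      hermiteFun (γ i) (x i) * ∏ j ∈ Finset.univ.erase i, hermiteFun (γ j) (x j) := by
  conv_lhs => rw [← Function.update_eq_self i γ]
  exact hermiteFunMulti_update d γ i (γ i) x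

lemma hermiteFunMulti_rec (d : ℕ) (γ : Fin d → ℕ) (i : Fin d) (x : EuclideanSpace ℝ (Fin d)) :
    x i * hermiteFunMulti d γ x = Real.sqrt (γ i + 1) * hermiteFunMulti d (upIdx γ i) x +
      Real.sqrt (γ i) * hermiteFunMulti d (dnIdx γ i) x := by
  unfold upIdx dnIdx
  rw [hermiteFunMulti_update, hermiteFunMulti_update, hermiteFunMulti_split d γ i]
  linear_combination (∏ j ∈ Finset.univ.erase i, hermiteFun (γ j) (x j)) * hermiteFun_rec (γ i) (x i)

lemma hermiteFunMulti_hasLineDerivAt (d : ℕ) (γ : Fin d → ℕ) (i : Fin d)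
    (x : EuclideanSpace ℝ (Fin d)) :
    HasLineDerivAt ℝ (hermiteFunMulti d γ)
      ((Real.sqrt (γ i) * hermiteFunMulti d (dnIdx γ i) x -
        Real.sqrt (γ i + 1) * hermiteFunMulti d (upIdx γ i) x) / 2) x
      (EuclideanSpace.single i (1 : ℝ)) := by
  unfold HasLineDerivAt
  have h0 : (fun t : ℝ => hermiteFunMulti d γ (x + t • EuclideanSpace.single i (1 : ℝ))) =
      fun t : ℝ => hermiteFun (γ i) (x i + t) *
        ∏ j ∈ Finset.univ.erase i, hermiteFun (γ j) (x j) := by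
    funext t
    rw [hermiteFunMulti_split d γ i]
    congr 1
    · simp
    · refine Finset.prod_congr rfl fun j hj => ?_
      have := Finset.ne_of_mem_erase hj
      simp [this]
  rw [h0]
  have h1 := hermiteFun_hasDerivAt (γ i) (x i + 0)
  have h2 := (HasDerivAt.comp_const_add (x i) (0 : ℝ) h1).mul_const
    (∏ j ∈ Finset.univ.erase i, hermiteFun (γ j) (x j))
  refine h2.congr_deriv ?_
  unfold upIdx dnIdx
  rw [hermiteFunMulti_update, hermiteFunMulti_update, add_zero]
  ring

lemma hermiteFunMulti_orth (d : ℕ) (α β : Fin d → ℕ) :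
    ∫ x, hermiteFunMulti d α x * hermiteFunMulti d β x = if α = β then 1 else 0 := by
  have h1 : ∫ x : EuclideanSpace ℝ (Fin d), hermiteFunMulti d α x * hermiteFunMulti d β x
      = ∫ y : Fin d → ℝ, ∏ i, (hermiteFun (α i) (y i) * hermiteFun (β i) (y i)) := by
    rw [← (PiLp.volume_preserving_toLp (Fin d)).integral_comp
      (MeasurableEquiv.toLp 2 (Fin d → ℝ)).measurableEmbedding]
    congr 1; funext y
    simp [hermiteFunMulti, Finset.prod_mul_distrib]
  rw [h1, integral_fintype_prod_volume_eq_prod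
    (fun i t => hermiteFun (α i) t * hermiteFun (β i) t)]
  have h2 : ∀ i, (∫ t, hermiteFun (α i) t * hermiteFun (β i) t) = if α i = β i then 1 else 0 :=
    fun i => hip_eq _ _
  simp_rw [h2]
  split_ifs with h
  · subst h; simp
  · obtain ⟨i, hi⟩ := Function.ne_iff.1 h
    exact Finset.prod_eq_zero (Finset.mem_univ i) (by simp [hi])

/-! ### Weights -/

/-- the weight `∏ (γ_i + 1)` -/
noncomputable def wgt {d : ℕ} (γ : Fin d → ℕ) : ℝ := ∏ i, ((γ i : ℝ) + 1)

lemma one_le_wgt {d : ℕ} (γ : Fin d → ℕ) : 1 ≤ wgt γ := by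
  unfold wgt
  have : ∏ i : Fin d, (1 : ℝ) ≤ ∏ i, ((γ i : ℝ) + 1) :=
    Finset.prod_le_prod (fun _ _ => zero_le_one) fun i _ => by
      have : (0 : ℝ) ≤ γ i := Nat.cast_nonneg _
      linarith
  simpa using this

lemma wgt_update {d : ℕ} (γ : Fin d → ℕ) (i : Fin d) (n : ℕ) :
    wgt (Function.update γ i n) = ((n : ℝ) + 1) * ∏ j ∈ Finset.univ.erase i, ((γ j : ℝ) + 1) := by
  unfold wgt
  rw [← Finset.mul_prod_erase Finset.univ _ (Finset.mem_univ i), Function.update_self]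
  congr 1
  refine Finset.prod_congr rfl fun j hj => ?_
  rw [Function.update_of_ne (Finset.ne_of_mem_erase hj)]

lemma wgt_split {d : ℕ} (γ : Fin d → ℕ) (i : Fin d) :
    wgt γ = ((γ i : ℝ) + 1) * ∏ j ∈ Finset.univ.erase i, ((γ j : ℝ) + 1) := by
  conv_lhs => rw [← Function.update_eq_self i γ]
  exact wgt_update γ i (γ i)

lemma wgt_erase_one_le {d : ℕ} (γ : Fin d → ℕ) (i : Fin d) :
    1 ≤ ∏ j ∈ Finset.univ.erase i, ((γ j : ℝ) + 1) := by
  have : ∏ j ∈ Finset.univ.erase i, (1 : ℝ) ≤ ∏ j ∈ Finset.univ.erase i, ((γ j : ℝ) + 1) :=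
    Finset.prod_le_prod (fun _ _ => zero_le_one) fun i _ => by
      have : (0 : ℝ) ≤ γ i := Nat.cast_nonneg _
      linarith
  simpa using this

lemma wgt_up {d : ℕ} (γ : Fin d → ℕ) (i : Fin d) : wgt (upIdx γ i) ≤ 2 * wgt γ := by
  unfold upIdx
  rw [wgt_update, wgt_split γ i, ← mul_assoc]
  have := wgt_erase_one_le γ i
  have h0 : (0 : ℝ) ≤ γ i := Nat.cast_nonneg _
  gcongr
  push_cast
  linarith

lemma wgt_dn {d : ℕ} (γ : Fin d → ℕ) (i : Fin d) : wgt (dnIdx γ i) ≤ 2 * wgt γ := by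
  unfold dnIdx
  rw [wgt_update, wgt_split γ i, ← mul_assoc]
  have := wgt_erase_one_le γ i
  have h0 : (0 : ℝ) ≤ γ i := Nat.cast_nonneg _
  have h1 : ((γ i - 1 : ℕ) : ℝ) ≤ γ i := by exact_mod_cast Nat.sub_le _ _
  gcongr
  linarith

lemma le_wgt {d : ℕ} (γ : Fin d → ℕ) (i : Fin d) : (γ i : ℝ) + 1 ≤ wgt γ := by
  rw [wgt_split γ i]
  have := wgt_erase_one_le γ i
  have h0 : (0 : ℝ) ≤ γ i := Nat.cast_nonneg _
  exact le_mul_of_one_le_right (by positivity) this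

lemma sqrt_up_le {d : ℕ} (γ : Fin d → ℕ) (i : Fin d) : Real.sqrt (γ i + 1) ≤ wgt γ := by
  have h0 : (0 : ℝ) ≤ γ i := Nat.cast_nonneg _
  refine le_trans ?_ (le_wgt γ i)
  rw [Real.sqrt_le_left (by positivity)]
  nlinarith

lemma sqrt_dn_le {d : ℕ} (γ : Fin d → ℕ) (i : Fin d) : Real.sqrt (γ i) ≤ wgt γ :=
  (Real.sqrt_le_sqrt (by linarith)).trans (sqrt_up_le γ i)

lemma summable_wgt (d : ℕ) : Summable (fun γ : Fin d → ℕ => ((wgt γ) ^ 2)⁻¹) := by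
  induction d with
  | zero => exact Summable.of_finite
  | succ d ih =>
    have h1 : Summable (fun n : ℕ => (((n : ℝ) + 1) ^ 2)⁻¹) := by
      have := (summable_nat_add_iff 1).2 (Real.summable_nat_pow_inv.2 (one_lt_two))
      simpa using this
    have h2 := h1.mul_of_nonneg ih (fun n => by positivity) (fun γ => by positivity)
    rw [← (Fin.consEquiv (fun _ : Fin (d + 1) => ℕ)).summable_iff]
    refine h2.congr fun p => ?_
    simp [wgt, Fin.consEquiv, Fin.prod_univ_succ, mul_pow, mul_comm]

/-- polynomially bounded families -/
def PolyBdd {d : ℕ} (q : (Fin d → ℕ) → ℝ) : Prop :=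
  ∃ C : ℝ, ∃ N : ℕ, 0 ≤ C ∧ ∀ γ, q γ ≤ C * wgt γ ^ N

lemma PolyBdd.mono {d : ℕ} {p q : (Fin d → ℕ) → ℝ} (hq : PolyBdd q) (h : ∀ γ, p γ ≤ q γ) :
    PolyBdd p := by
  obtain ⟨C, N, hC, H⟩ := hq
  exact ⟨C, N, hC, fun γ => (h γ).trans (H γ)⟩

lemma PolyBdd.add {d : ℕ} {p q : (Fin d → ℕ) → ℝ} (hp : PolyBdd p) (hq : PolyBdd q) :
    PolyBdd (fun γ => p γ + q γ) := by
  obtain ⟨C, N, hC, H⟩ := hp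
  obtain ⟨C', N', hC', Hbd⟩ := hq
  refine ⟨C + C', N + N', by positivity, fun γ => ?_⟩
  have h1 := one_le_wgt γ
  have a1 : wgt γ ^ N ≤ wgt γ ^ (N + N') := pow_le_pow_right₀ h1 (by omega)
  have a2 : wgt γ ^ N' ≤ wgt γ ^ (N + N') := pow_le_pow_right₀ h1 (by omega)
  calc p γ + q γ ≤ C * wgt γ ^ N + C' * wgt γ ^ N' := add_le_add (H γ) (Hbd γ)
    _ ≤ C * wgt γ ^ (N + N') + C' * wgt γ ^ (N + N') := by gcongr
    _ = _ := by ring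

lemma PolyBdd.sum {d : ℕ} {ι : Type*} (s : Finset ι) {p : ι → (Fin d → ℕ) → ℝ}
    (hp : ∀ i, PolyBdd (p i)) : PolyBdd (fun γ => ∑ i ∈ s, p i γ) := by
  classical
  induction s using Finset.induction_on with
  | empty => exact ⟨0, 0, le_rfl, fun γ => by simp⟩
  | insert i s hi ih =>
    simp_rw [Finset.sum_insert hi]
    exact (hp i).add ih

lemma PolyBdd.const_mul {d : ℕ} {p : (Fin d → ℕ) → ℝ} (hp : PolyBdd p) {c : ℝ} (hc : 0 ≤ c) :
    PolyBdd (fun γ => c * p γ) := by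
  obtain ⟨C, N, hC, H⟩ := hp
  refine ⟨c * C, N, by positivity, fun γ => ?_⟩
  rw [mul_assoc]
  exact mul_le_mul_of_nonneg_left (H γ) hc

lemma PolyBdd.shift {d : ℕ} {q : (Fin d → ℕ) → ℝ} (hq : PolyBdd q)
    (σ : (Fin d → ℕ) → (Fin d → ℕ)) (hσ : ∀ γ, wgt (σ γ) ≤ 2 * wgt γ)
    (a : (Fin d → ℕ) → ℝ) (ha0 : ∀ γ, 0 ≤ a γ) (ha : ∀ γ, a γ ≤ wgt γ) :
    PolyBdd (fun γ => a γ * q (σ γ)) := by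
  obtain ⟨C, N, hC, H⟩ := hq
  refine ⟨C * 2 ^ N, N + 1, by positivity, fun γ => ?_⟩
  have h1 := one_le_wgt γ
  have h2 := one_le_wgt (σ γ)
  calc a γ * q (σ γ) ≤ a γ * (C * wgt (σ γ) ^ N) := mul_le_mul_of_nonneg_left (H _) (ha0 γ)
    _ ≤ wgt γ * (C * (2 * wgt γ) ^ N) := by
        have := ha γ
        have := hσ γ
        gcongr
    _ = _ := by rw [mul_pow]; ring

lemma PolyBdd.ladder {d : ℕ} {q : (Fin d → ℕ) → ℝ} (hq : PolyBdd q) (i : Fin d) :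
    PolyBdd (fun γ => Real.sqrt (γ i + 1) * q (upIdx γ i) + Real.sqrt (γ i) * q (dnIdx γ i)) :=
  (hq.shift (fun γ => upIdx γ i) (fun γ => wgt_up γ i) _ (fun _ => Real.sqrt_nonneg _)
    (fun γ => sqrt_up_le γ i)).add
  (hq.shift (fun γ => dnIdx γ i) (fun γ => wgt_dn γ i) _ (fun _ => Real.sqrt_nonneg _)
    (fun γ => sqrt_dn_le γ i))


/-! ### Seminorm bounds -/

open scoped LineDeriv SchwartzMap

lemma hermiteFunMulti_sup (d : ℕ) (γ : Fin d → ℕ) (x : EuclideanSpace ℝ (Fin d)) :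
    |hermiteFunMulti d γ x| ≤ 2 ^ d * wgt γ := by
  unfold hermiteFunMulti wgt
  rw [Finset.abs_prod]
  calc ∏ i, |hermiteFun (γ i) (x i)| ≤ ∏ i : Fin d, (2 * ((γ i : ℝ) + 1)) :=
        Finset.prod_le_prod (fun _ _ => abs_nonneg _) fun i _ => hermiteFun_sup _ _
    _ = _ := by rw [Finset.prod_mul_distrib]; simp

lemma euclid_norm_le_sum {d : ℕ} (x : EuclideanSpace ℝ (Fin d)) : ‖x‖ ≤ ∑ i, |x i| := by
  have h : x = ∑ i, x i • EuclideanSpace.single i (1 : ℝ) := by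
    ext j
    simp [Finset.sum_apply, Pi.single_apply]
  calc ‖x‖ = ‖∑ i, x i • EuclideanSpace.single i (1 : ℝ)‖ := by rw [← h]
    _ ≤ ∑ i, ‖x i • EuclideanSpace.single i (1 : ℝ)‖ := norm_sum_le _ _
    _ = _ := by simp [norm_smul]

lemma hermiteFunMulti_decay (d : ℕ) (k : ℕ) : ∃ q : (Fin d → ℕ) → ℝ, PolyBdd q ∧
    (∀ γ, 0 ≤ q γ) ∧ ∀ γ x, ‖x‖ ^ k * |hermiteFunMulti d γ x| ≤ q γ := by
  induction k with
  | zero =>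
    refine ⟨fun γ => 2 ^ d * wgt γ, ⟨2 ^ d, 1, by positivity, fun γ => by simp⟩, fun γ => ?_,
      fun γ x => ?_⟩
    · have := one_le_wgt γ
      positivity
    · simpa using hermiteFunMulti_sup d γ x
  | succ k ih =>
    obtain ⟨q, hq, hq0, H⟩ := ih
    refine ⟨fun γ => ∑ i, (Real.sqrt (γ i + 1) * q (upIdx γ i) + Real.sqrt (γ i) * q (dnIdx γ i)),
      PolyBdd.sum _ fun i => hq.ladder i, fun γ => ?_, fun γ x => ?_⟩
    · refine Finset.sum_nonneg fun i _ => ?_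
      have := hq0 (upIdx γ i)
      have := hq0 (dnIdx γ i)
      positivity
    · calc ‖x‖ ^ (k + 1) * |hermiteFunMulti d γ x|
          = ‖x‖ * (‖x‖ ^ k * |hermiteFunMulti d γ x|) := by ring
        _ ≤ (∑ i, |x i|) * (‖x‖ ^ k * |hermiteFunMulti d γ x|) := by
            gcongr; exact euclid_norm_le_sum x
        _ = ∑ i, ‖x‖ ^ k * |x i * hermiteFunMulti d γ x| := by
            rw [Finset.sum_mul]
            refine Finset.sum_congr rfl fun i _ => ?_
            rw [abs_mul]; ring
        _ ≤ _ := by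
            refine Finset.sum_le_sum fun i _ => ?_
            rw [hermiteFunMulti_rec]
            calc _ ≤ ‖x‖ ^ k * (|Real.sqrt (γ i + 1) * hermiteFunMulti d (upIdx γ i) x| +
                  |Real.sqrt (γ i) * hermiteFunMulti d (dnIdx γ i) x|) := by
                    gcongr; exact abs_add_le _ _
              _ = Real.sqrt (γ i + 1) * (‖x‖ ^ k * |hermiteFunMulti d (upIdx γ i) x|) +
                  Real.sqrt (γ i) * (‖x‖ ^ k * |hermiteFunMulti d (dnIdx γ i) x|) := by
                    rw [abs_mul, abs_mul, abs_of_nonneg (Real.sqrt_nonneg _),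
                      abs_of_nonneg (Real.sqrt_nonneg _)]; ring
              _ ≤ _ := by
                    gcongr
                    · exact H _ _
                    · exact H _ _

/-- Schwartz seminorm with one more derivative is controlled by the seminorms of the partial
derivatives. -/
lemma seminorm_succ_le {d : ℕ} (k l : ℕ) (f : 𝓢(EuclideanSpace ℝ (Fin d), ℝ)) :
    SchwartzMap.seminorm ℝ k (l + 1) f ≤
      ∑ i : Fin d, SchwartzMap.seminorm ℝ k l (∂_{EuclideanSpace.single i (1 : ℝ)} f) := by
  let L : Fin d → (ℝ →L[ℝ] (EuclideanSpace ℝ (Fin d) →L[ℝ] ℝ)) := fun i =>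
    ContinuousLinearMap.toSpanSingleton ℝ
      (EuclideanSpace.proj i : EuclideanSpace ℝ (Fin d) →L[ℝ] ℝ)
  have hL : ∀ i, ‖L i‖ ≤ 1 := by
    intro i
    rw [ContinuousLinearMap.norm_toSpanSingleton]
    refine ContinuousLinearMap.opNorm_le_bound _ zero_le_one fun x => ?_
    rw [one_mul]
    exact PiLp.norm_apply_le x i
  have hfd : fderiv ℝ f = fun x => ∑ i, L i ((∂_{EuclideanSpace.single i (1 : ℝ)} f) x) := by
    funext x
    ext v
    have hv : v = ∑ i, v i • EuclideanSpace.single i (1 : ℝ) := by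
      ext j
      simp [Finset.sum_apply, Pi.single_apply]
    conv_lhs => rw [hv]
    simp only [map_sum, map_smul, smul_eq_mul, _root_.sum_apply, L,
      ContinuousLinearMap.toSpanSingleton_apply, SchwartzMap.lineDerivOp_apply_eq_fderiv]
    refine Finset.sum_congr rfl fun i _ => ?_
    simp [mul_comm]
  refine SchwartzMap.seminorm_le_bound ℝ k (l + 1) f
    (Finset.sum_nonneg fun i _ => apply_nonneg _ _) fun x => ?_
  rw [← norm_iteratedFDeriv_fderiv, hfd]
  have hc : ∀ i ∈ (Finset.univ : Finset (Fin d)), ContDiff ℝ l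
      (fun x => L i ((∂_{EuclideanSpace.single i (1 : ℝ)} f) x)) := fun i _ =>
    (L i).contDiff.comp ((∂_{EuclideanSpace.single i (1 : ℝ)} f).smooth l)
  rw [iteratedFDeriv_sum hc, Finset.sum_apply]
  calc ‖x‖ ^ k * _ ≤ ‖x‖ ^ k * ∑ i, ‖iteratedFDeriv ℝ l
        (fun x => L i ((∂_{EuclideanSpace.single i (1 : ℝ)} f) x)) x‖ := by
        gcongr; exact norm_sum_le _ _
    _ ≤ ‖x‖ ^ k * ∑ i, ‖iteratedFDeriv ℝ l
        ⇑(∂_{EuclideanSpace.single i (1 : ℝ)} f : 𝓢(EuclideanSpace ℝ (Fin d), ℝ)) x‖ := by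
        gcongr with i
        have h1 := (L i).norm_iteratedFDeriv_comp_left (n := l) (N := l)
          ((∂_{EuclideanSpace.single i (1 : ℝ)} f).smooth l).contDiffAt (x := x) le_rfl
        refine h1.trans ?_
        exact mul_le_of_le_one_left (norm_nonneg _) (hL i)
    _ = ∑ i, ‖x‖ ^ k * ‖iteratedFDeriv ℝ l
        ⇑(∂_{EuclideanSpace.single i (1 : ℝ)} f : 𝓢(EuclideanSpace ℝ (Fin d), ℝ)) x‖ := by
        rw [Finset.mul_sum]
    _ ≤ _ := Finset.sum_le_sum fun i _ => SchwartzMap.le_seminorm ℝ k l _ x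

section
variable {d : ℕ} {h : (Fin d → ℕ) → 𝓢(EuclideanSpace ℝ (Fin d), ℝ)}

lemma hermite_lineDeriv (hh : ∀ β x, h β x = hermiteFunMulti d β x) (γ : Fin d → ℕ) (i : Fin d) :
    ∂_{EuclideanSpace.single i (1 : ℝ)} (h γ) =
      (2⁻¹ * Real.sqrt (γ i)) • h (dnIdx γ i) - (2⁻¹ * Real.sqrt (γ i + 1)) • h (upIdx γ i) := by
  ext x
  have hf : (h γ : EuclideanSpace ℝ (Fin d) → ℝ) = hermiteFunMulti d γ := funext (hh γ)
  rw [SchwartzMap.lineDerivOp_apply, hf, (hermiteFunMulti_hasLineDerivAt d γ i x).lineDeriv]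
  simp [hh]
  ring

lemma hermite_seminorm (hh : ∀ β x, h β x = hermiteFunMulti d β x) (k l : ℕ) :
    PolyBdd (fun γ => SchwartzMap.seminorm ℝ k l (h γ)) := by
  induction l with
  | zero =>
    obtain ⟨q, hq, hq0, H⟩ := hermiteFunMulti_decay d k
    refine hq.mono fun γ => ?_
    refine SchwartzMap.seminorm_le_bound ℝ k 0 _ (hq0 γ) fun x => ?_
    rw [norm_iteratedFDeriv_zero, hh, Real.norm_eq_abs]
    exact H γ x
  | succ l ih =>
    refine (PolyBdd.sum Finset.univ fun i => ih.ladder i).mono fun γ => ?_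
    refine (seminorm_succ_le k l (h γ)).trans (Finset.sum_le_sum fun i _ => ?_)
    rw [hermite_lineDeriv hh]
    refine (map_sub_le_add _ _ _).trans ?_
    rw [map_smul_eq_mul, map_smul_eq_mul, Real.norm_of_nonneg (by positivity),
      Real.norm_of_nonneg (by positivity), add_comm]
    have a1 : 0 ≤ SchwartzMap.seminorm ℝ k l (h (upIdx γ i)) := apply_nonneg _ _
    have a2 : 0 ≤ SchwartzMap.seminorm ℝ k l (h (dnIdx γ i)) := apply_nonneg _ _
    have b1 := Real.sqrt_nonneg ((γ i : ℝ) + 1)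
    have b2 := Real.sqrt_nonneg (γ i : ℝ)
    gcongr <;> linarith

end

/-- Absolutely summable families of Schwartz functions are summable. -/
lemma schwartz_summable {ι E : Type*} [NormedAddCommGroup E] [NormedSpace ℝ E]
    (u : ι → 𝓢(E, ℝ)) (hu : ∀ k l, Summable (fun i => SchwartzMap.seminorm ℝ k l (u i))) :
    ∃ g : 𝓢(E, ℝ), HasSum u g := by
  have hb : ∀ (l : ℕ) (i : ι) (x : E), ‖iteratedFDeriv ℝ l (u i) x‖ ≤
      SchwartzMap.seminorm ℝ 0 l (u i) := fun l i x =>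
    SchwartzMap.norm_iteratedFDeriv_le_seminorm ℝ (u i) l x
  have hsum : ∀ (l : ℕ) (x : E), Summable (fun i => iteratedFDeriv ℝ l (u i) x) := fun l x =>
    Summable.of_norm_bounded (hu 0 l) (fun i => hb l i x)
  have hder : ∀ (l : ℕ) (x : E), iteratedFDeriv ℝ l (fun y => ∑' i, u i y) x =
      ∑' i, iteratedFDeriv ℝ l (u i) x := fun l x =>
    iteratedFDeriv_tsum_apply (N := (⊤ : ℕ∞)) (fun i => (u i).smooth ⊤)
      (fun l _ => hu 0 l) (fun l i x _ => hb l i x) le_top x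
  have hcd : ContDiff ℝ ((⊤ : ℕ∞) : WithTop ℕ∞) (fun y => ∑' i, u i y) :=
    contDiff_tsum (N := (⊤ : ℕ∞)) (fun i => (u i).smooth ⊤)
      (fun l _ => hu 0 l) (fun l i x _ => hb l i x)
  -- the tail estimate
  have tail : ∀ (k l : ℕ) (s : Finset ι) (x : E),
      ‖x‖ ^ k * ‖∑' i, iteratedFDeriv ℝ l (u i) x - ∑ i ∈ s, iteratedFDeriv ℝ l (u i) x‖ ≤
        ∑' i : {i // i ∉ s}, SchwartzMap.seminorm ℝ k l (u i) := by
    intro k l s x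
    have e1 : ∑' i, iteratedFDeriv ℝ l (u i) x - ∑ i ∈ s, iteratedFDeriv ℝ l (u i) x
        = ∑' i : {i // i ∉ s}, iteratedFDeriv ℝ l (u i) x := by
      rw [← (hsum l x).sum_add_tsum_subtype_compl s]
      simp
    have e2 : ‖x‖ ^ k * ‖∑' i : {i // i ∉ s}, iteratedFDeriv ℝ l (u i) x‖
        = ‖∑' i : {i // i ∉ s}, (‖x‖ ^ k) • iteratedFDeriv ℝ l (u i) x‖ := by
      rw [tsum_const_smul'', norm_smul, Real.norm_of_nonneg (by positivity)]
    rw [e1, e2]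
    refine tsum_of_norm_bounded ((hu k l).subtype {i | i ∉ s}).hasSum fun i => ?_
    rw [norm_smul, Real.norm_of_nonneg (by positivity)]
    exact SchwartzMap.le_seminorm ℝ k l (u i) x
  let g : 𝓢(E, ℝ) :=
    { toFun := fun y => ∑' i, u i y
      smooth' := hcd
      decay' := by
        intro k l
        refine ⟨∑' i : {i // i ∉ (∅ : Finset ι)}, SchwartzMap.seminorm ℝ k l (u i), fun x => ?_⟩
        have := tail k l ∅ x
        rw [hder]
        simpa using this }
  refine ⟨g, ?_⟩
  unfold HasSum
  rw [(schwartz_withSeminorms ℝ E ℝ).tendsto_nhds]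
  rintro ⟨k, l⟩ ε hε
  have ht := tendsto_tsum_compl_atTop_zero (fun i => SchwartzMap.seminorm ℝ k l (u i))
  have := ht.eventually (gt_mem_nhds hε)
  refine this.mono fun s hs => lt_of_le_of_lt ?_ hs
  rw [SchwartzMap.schwartzSeminormFamily_apply]
  refine SchwartzMap.seminorm_le_bound ℝ k l _ (tsum_nonneg fun i => apply_nonneg _ _) fun x => ?_
  have e : iteratedFDeriv ℝ l (⇑(∑ i ∈ s, u i - g)) x =
      ∑ i ∈ s, iteratedFDeriv ℝ l (u i) x - ∑' i, iteratedFDeriv ℝ l (u i) x := by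
    have e0 : (⇑(∑ i ∈ s, u i - g) : E → ℝ) = (fun y => ∑ i ∈ s, u i y) - fun y => ∑' i, u i y := by
      funext y
      simp [g]
      rfl
    rw [e0, iteratedFDeriv_sub_apply, hder, iteratedFDeriv_sum, Finset.sum_apply]
    · exact fun i _ => (u i).smooth l
    · exact (ContDiff.sum fun i _ => (u i).smooth l).contDiffAt
    · exact (hcd.of_le (by exact_mod_cast le_top)).contDiffAt
  rw [e, norm_sub_rev]
  exact tail k l s x


/-! ### Hermite coefficients -/

section
variable {d : ℕ} {h : (Fin d → ℕ) → 𝓢(EuclideanSpace ℝ (Fin d), ℝ)}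

/-- multiplication of real Schwartz functions, as a CLM in the second argument -/
noncomputable def coefCLM (h : (Fin d → ℕ) → 𝓢(EuclideanSpace ℝ (Fin d), ℝ)) (γ : Fin d → ℕ) :
    𝓢(EuclideanSpace ℝ (Fin d), ℝ) →L[ℝ] ℝ :=
  (SchwartzMap.integralCLM ℝ volume).comp (SchwartzMap.smulLeftCLM ℝ (h γ))

lemma coefCLM_apply (γ : Fin d → ℕ) (f : 𝓢(EuclideanSpace ℝ (Fin d), ℝ)) :
    coefCLM h γ f = ∫ x, h γ x * f x := by
  unfold coefCLM
  rw [ContinuousLinearMap.comp_apply, SchwartzMap.integralCLM_apply]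
  congr 1; funext x
  rw [SchwartzMap.smulLeftCLM_apply_apply (h γ).hasTemperateGrowth, smul_eq_mul]

lemma schwartz_mul_integrable (f g : 𝓢(EuclideanSpace ℝ (Fin d), ℝ)) :
    Integrable (fun x => f x * g x) := by
  refine (SchwartzMap.smulLeftCLM ℝ f g).integrable.congr (Filter.Eventually.of_forall fun x => ?_)
  rw [SchwartzMap.smulLeftCLM_apply_apply f.hasTemperateGrowth, smul_eq_mul]

/-- multiplication by the `i`-th coordinate -/
noncomputable def mulX (i : Fin d) :
    𝓢(EuclideanSpace ℝ (Fin d), ℝ) →L[ℝ] 𝓢(EuclideanSpace ℝ (Fin d), ℝ) :=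
  SchwartzMap.smulLeftCLM ℝ (EuclideanSpace.proj i : EuclideanSpace ℝ (Fin d) →L[ℝ] ℝ)

lemma mulX_apply (i : Fin d) (f : 𝓢(EuclideanSpace ℝ (Fin d), ℝ)) (x : EuclideanSpace ℝ (Fin d)) :
    mulX i f x = x i * f x := by
  unfold mulX
  rw [SchwartzMap.smulLeftCLM_apply_apply (ContinuousLinearMap.hasTemperateGrowth _), smul_eq_mul]
  rfl

lemma coef_mulX (hh : ∀ β x, h β x = hermiteFunMulti d β x) (γ : Fin d → ℕ) (i : Fin d)
    (f : 𝓢(EuclideanSpace ℝ (Fin d), ℝ)) :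
    coefCLM h γ (mulX i f) = Real.sqrt (γ i + 1) * coefCLM h (upIdx γ i) f +
      Real.sqrt (γ i) * coefCLM h (dnIdx γ i) f := by
  simp only [coefCLM_apply]
  rw [← integral_const_mul, ← integral_const_mul, ← integral_add
    ((schwartz_mul_integrable _ _).const_mul _) ((schwartz_mul_integrable _ _).const_mul _)]
  congr 1; funext x
  rw [mulX_apply, hh, hh, hh]
  linear_combination f x * hermiteFunMulti_rec d γ i x

lemma coef_lineDeriv (hh : ∀ β x, h β x = hermiteFunMulti d β x) (γ : Fin d → ℕ) (i : Fin d)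
    (f : 𝓢(EuclideanSpace ℝ (Fin d), ℝ)) :
    coefCLM h γ (∂_{EuclideanSpace.single i (1 : ℝ)} f) =
      2⁻¹ * Real.sqrt (γ i + 1) * coefCLM h (upIdx γ i) f -
      2⁻¹ * Real.sqrt (γ i) * coefCLM h (dnIdx γ i) f := by
  simp only [coefCLM_apply]
  rw [SchwartzMap.integral_mul_lineDerivOp_right_eq_neg_left, hermite_lineDeriv hh,
    ← integral_const_mul, ← integral_const_mul, ← integral_sub
    ((schwartz_mul_integrable _ _).const_mul _) ((schwartz_mul_integrable _ _).const_mul _),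
    ← integral_neg]
  congr 1; funext x
  simp
  ring

/-- number operator (plus one) -/
lemma exists_number_op (hh : ∀ β x, h β x = hermiteFunMulti d β x) (i : Fin d)
    (f : 𝓢(EuclideanSpace ℝ (Fin d), ℝ)) :
    ∃ g, ∀ γ, coefCLM h γ g = ((γ i : ℝ) + 1) * coefCLM h γ f := by
  set f1 := (2⁻¹ : ℝ) • mulX i f - ∂_{EuclideanSpace.single i (1 : ℝ)} f with hf1
  have c1 : ∀ γ, coefCLM h γ f1 = Real.sqrt (γ i) * coefCLM h (dnIdx γ i) f := by
    intro γ
    rw [hf1, map_sub, map_smul, coef_mulX hh, coef_lineDeriv hh, smul_eq_mul]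
    ring
  refine ⟨(2⁻¹ : ℝ) • mulX i f1 + ∂_{EuclideanSpace.single i (1 : ℝ)} f1, fun γ => ?_⟩
  rw [map_add, map_smul, coef_mulX hh, coef_lineDeriv hh, smul_eq_mul, c1 (upIdx γ i)]
  have e1 : dnIdx (upIdx γ i) i = γ := by simp [dnIdx, upIdx]
  have e2 : ((upIdx γ i i : ℕ) : ℝ) = γ i + 1 := by simp [upIdx]
  rw [e1, e2]
  have := Real.mul_self_sqrt (show (0 : ℝ) ≤ (γ i : ℝ) + 1 by positivity)
  linear_combination coefCLM h γ f * this

lemma exists_wgt_op (hh : ∀ β x, h β x = hermiteFunMulti d β x)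
    (f : 𝓢(EuclideanSpace ℝ (Fin d), ℝ)) :
    ∃ g, ∀ γ, coefCLM h γ g = wgt γ * coefCLM h γ f := by
  have : ∀ s : Finset (Fin d), ∃ g, ∀ γ, coefCLM h γ g =
      (∏ i ∈ s, ((γ i : ℝ) + 1)) * coefCLM h γ f := by
    intro s
    induction s using Finset.induction_on with
    | empty => exact ⟨f, fun γ => by simp⟩
    | insert i s hi ih =>
      obtain ⟨g, hg⟩ := ih
      obtain ⟨g', hg'⟩ := exists_number_op hh i g
      refine ⟨g', fun γ => ?_⟩
      rw [hg', hg, Finset.prod_insert hi, mul_assoc]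
  exact this Finset.univ

lemma exists_wgt_pow_op (hh : ∀ β x, h β x = hermiteFunMulti d β x)
    (f : 𝓢(EuclideanSpace ℝ (Fin d), ℝ)) (m : ℕ) :
    ∃ g, ∀ γ, coefCLM h γ g = wgt γ ^ m * coefCLM h γ f := by
  induction m with
  | zero => exact ⟨f, fun γ => by simp⟩
  | succ m ih =>
    obtain ⟨g, hg⟩ := ih
    obtain ⟨g', hg'⟩ := exists_wgt_op hh g
    exact ⟨g', fun γ => by rw [hg', hg]; ring⟩

lemma coef_le (hh : ∀ β x, h β x = hermiteFunMulti d β x)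
    (f : 𝓢(EuclideanSpace ℝ (Fin d), ℝ)) :
    ∃ C, 0 ≤ C ∧ ∀ γ, |coefCLM h γ f| ≤ C * wgt γ := by
  refine ⟨2 ^ d * ∫ x, ‖f x‖, mul_nonneg (by positivity) (integral_nonneg fun x => norm_nonneg _),
    fun γ => ?_⟩
  rw [coefCLM_apply, ← Real.norm_eq_abs]
  calc ‖∫ x, h γ x * f x‖ ≤ ∫ x, (2 ^ d * wgt γ) * ‖f x‖ := by
        refine norm_integral_le_of_norm_le (f.integrable.norm.const_mul _)
          (Filter.Eventually.of_forall fun x => ?_)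
        rw [norm_mul, hh]
        gcongr
        exact hermiteFunMulti_sup d γ x
    _ = _ := by rw [integral_const_mul]; ring

lemma coef_decay (hh : ∀ β x, h β x = hermiteFunMulti d β x)
    (f : 𝓢(EuclideanSpace ℝ (Fin d), ℝ)) (m : ℕ) :
    ∃ C, 0 ≤ C ∧ ∀ γ, wgt γ ^ m * |coefCLM h γ f| ≤ C := by
  obtain ⟨g, hg⟩ := exists_wgt_pow_op hh f (m + 1)
  obtain ⟨C, hC, H⟩ := coef_le hh g
  refine ⟨C, hC, fun γ => ?_⟩
  have h1 := one_le_wgt γ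
  have := H γ
  rw [hg, abs_mul, abs_of_nonneg (by positivity)] at this
  refine le_of_mul_le_mul_right (a := wgt γ) ?_ (by linarith)
  calc _ = wgt γ ^ (m + 1) * |coefCLM h γ f| := by ring
    _ ≤ _ := this

lemma summable_coef_seminorm (hh : ∀ β x, h β x = hermiteFunMulti d β x)
    (f : 𝓢(EuclideanSpace ℝ (Fin d), ℝ)) (k l : ℕ) :
    Summable (fun γ => SchwartzMap.seminorm ℝ k l (coefCLM h γ f • h γ)) := by
  obtain ⟨C, N, hC, H⟩ := hermite_seminorm hh k l
  obtain ⟨C', hC', Hbd⟩ := coef_decay hh f (N + 2)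
  refine Summable.of_nonneg_of_le (fun γ => apply_nonneg _ _) (fun γ => ?_)
    ((summable_wgt d).mul_left (C * C'))
  have h1 := one_le_wgt γ
  rw [map_smul_eq_mul, Real.norm_eq_abs, ← div_eq_mul_inv, le_div_iff₀ (by positivity)]
  calc |coefCLM h γ f| * SchwartzMap.seminorm ℝ k l (h γ) * wgt γ ^ 2
      ≤ |coefCLM h γ f| * (C * wgt γ ^ N) * wgt γ ^ 2 := by gcongr; exact H γ
    _ = C * (wgt γ ^ (N + 2) * |coefCLM h γ f|) := by ring
    _ ≤ _ := by gcongr; exact Hbd γ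

/-! ### Totality -/

lemma coef_zero_pow (hh : ∀ β x, h β x = hermiteFunMulti d β x)
    (f : 𝓢(EuclideanSpace ℝ (Fin d), ℝ)) (hf : ∀ γ, coefCLM h γ f = 0)
    (ξ : EuclideanSpace ℝ (Fin d)) (n : ℕ) :
    ∃ g : 𝓢(EuclideanSpace ℝ (Fin d), ℝ), (∀ x, g x = (inner ℝ x ξ) ^ n * f x) ∧
      ∀ γ, coefCLM h γ g = 0 := by
  induction n with
  | zero => exact ⟨f, fun x => by simp, hf⟩
  | succ n ih =>
    obtain ⟨g, hg, hg0⟩ := ih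
    refine ⟨∑ i, ξ i • mulX i g, fun x => ?_, fun γ => ?_⟩
    · have : (inner ℝ x ξ : ℝ) = ∑ i, ξ i * x i := by
        simp [PiLp.inner_apply]
      rw [_root_.sum_apply, pow_succ, mul_comm (_ ^ n), mul_assoc, ← hg, this, Finset.sum_mul]
      refine Finset.sum_congr rfl fun i _ => ?_
      rw [_root_.smul_apply, mulX_apply, smul_eq_mul, mul_assoc]
    · rw [map_sum]
      refine Finset.sum_eq_zero fun i _ => ?_
      rw [map_smul, coef_mulX hh, hg0, hg0]
      simp

lemma hermite_zero_formula (x : EuclideanSpace ℝ (Fin d)) :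
    hermiteFunMulti d 0 x = hcst 0 ^ d * Real.exp (-(‖x‖ ^ 2 / 4)) := by
  unfold hermiteFunMulti
  simp_rw [Pi.zero_apply, hermiteFun_zero]
  rw [Finset.prod_mul_distrib, ← Real.exp_sum, EuclideanSpace.norm_sq_eq]
  simp [Finset.sum_div]

open FourierTransform in
lemma hermite_total (hh : ∀ β x, h β x = hermiteFunMulti d β x)
    (f : 𝓢(EuclideanSpace ℝ (Fin d), ℝ)) (hf : ∀ γ, coefCLM h γ f = 0) : f = 0 := by
  set G : EuclideanSpace ℝ (Fin d) → ℂ := fun x => ((h 0 x * f x : ℝ) : ℂ) with hG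
  have hGi : Integrable G := (schwartz_mul_integrable (h 0) f).ofReal
  have hGc : Continuous G :=
    Complex.continuous_ofReal.comp ((h 0).continuous.mul f.continuous)
  have hpos : ∀ x, 0 < h 0 x := fun x => by
    rw [hh, hermite_zero_formula]
    have := hcst_zero_pos
    positivity
  have hF : 𝓕 G = 0 := by
    funext ξ
    rw [Real.fourier_eq']
    have hs := hasSum_integral_of_dominated_convergence (μ := volume) (ι := ℕ)
      (F := fun n x => ((((-2 * Real.pi * inner ℝ x ξ : ℝ) : ℂ) * Complex.I) ^ n / n.factorial) * G x)
      (f := fun x => Complex.exp (((-2 * Real.pi * inner ℝ x ξ : ℝ) : ℂ) * Complex.I) * G x)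
      (bound := fun n x => (|(-2 * Real.pi * inner ℝ x ξ : ℝ)| ^ n / n.factorial) * ‖G x‖)
      (fun n => Continuous.aestronglyMeasurable (by fun_prop))
      (fun n => Filter.Eventually.of_forall fun x => by simp)
      (Filter.Eventually.of_forall fun x =>
        (Real.summable_pow_div_factorial _).mul_right _)
      (by
        have e : ∀ x : EuclideanSpace ℝ (Fin d),
            ∑' n : ℕ, (|(-2 * Real.pi * inner ℝ x ξ : ℝ)| ^ n / n.factorial) * ‖G x‖
            = Real.exp |(-2 * Real.pi * inner ℝ x ξ : ℝ)| * ‖G x‖ := by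
          intro x
          rw [tsum_mul_right, Real.exp_eq_exp_ℝ, NormedSpace.exp_eq_tsum_div]
        simp_rw [e]
        set a : ℝ := 2 * Real.pi * ‖ξ‖ with ha
        refine Integrable.mono' (f.integrable.norm.const_mul (hcst 0 ^ d * Real.exp (a ^ 2)))
          (Continuous.aestronglyMeasurable (by fun_prop)) (Filter.Eventually.of_forall fun x => ?_)
        have b1 : |(-2 * Real.pi * inner ℝ x ξ : ℝ)| ≤ a * ‖x‖ := by
          rw [abs_mul, abs_mul, abs_of_pos Real.pi_pos, ha]
          have := abs_real_inner_le_norm x ξ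
          norm_num
          calc 2 * Real.pi * |inner ℝ x ξ| ≤ 2 * Real.pi * (‖x‖ * ‖ξ‖) := by gcongr
            _ = _ := by ring
        have b2 : ‖G x‖ = hcst 0 ^ d * Real.exp (-(‖x‖ ^ 2 / 4)) * ‖f x‖ := by
          have := hcst_zero_pos
          rw [hG, Complex.norm_real, norm_mul, hh, hermite_zero_formula,
            Real.norm_of_nonneg (r := hcst 0 ^ d * _) (by positivity)]
        have hc := hcst_zero_pos
        rw [b2, Real.norm_of_nonneg (by positivity)]
        calc _ ≤ Real.exp (a * ‖x‖) * (hcst 0 ^ d * Real.exp (-(‖x‖ ^ 2 / 4)) * ‖f x‖) := by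
              gcongr
          _ = hcst 0 ^ d * (Real.exp (a * ‖x‖ + -(‖x‖ ^ 2 / 4))) * ‖f x‖ := by
              rw [Real.exp_add]; ring
          _ ≤ _ := by
              gcongr
              nlinarith [sq_nonneg (a - ‖x‖ / 2)])
      (Filter.Eventually.of_forall fun x => by
        have := NormedSpace.expSeries_div_hasSum_exp
          (((-2 * Real.pi * inner ℝ x ξ : ℝ) : ℂ) * Complex.I)
        rw [← Complex.exp_eq_exp_ℂ] at this
        exact this.mul_right _)
    have hz : ∀ n : ℕ, ∫ x, ((((-2 * Real.pi * inner ℝ x ξ : ℝ) : ℂ) * Complex.I) ^ n / n.factorial)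
        * G x = 0 := by
      intro n
      obtain ⟨g, hg, hg0⟩ := coef_zero_pow hh f hf ξ n
      have e : ∀ x, ((((-2 * Real.pi * inner ℝ x ξ : ℝ) : ℂ) * Complex.I) ^ n / n.factorial) * G x
          = ((-2 * Real.pi : ℂ) * Complex.I) ^ n / n.factorial * ((h 0 x * g x : ℝ) : ℂ) := by
        intro x
        rw [hg, hG]
        push_cast
        rw [mul_pow, mul_pow, mul_pow]
        ring
      simp_rw [e]
      have e2 : ∫ x, ((h 0 x * g x : ℝ) : ℂ) = ((∫ x, h 0 x * g x : ℝ) : ℂ) :=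
        integral_complex_ofReal
      rw [integral_const_mul, e2, ← coefCLM_apply, hg0]
      simp
    simp_rw [hz] at hs
    have := hs.unique hasSum_zero
    simpa [smul_eq_mul] using this
  have hinv := hGc.fourierInv_fourier_eq hGi (by rw [hF]; exact integrable_zero _ _ _)
  ext x
  have hx : G x = 0 := by
    rw [← hinv, hF, Real.fourierInv_eq]
    simp
  have hx2 : ((h 0 x * f x : ℝ) : ℂ) = 0 := hx
  have hx3 : h 0 x * f x = 0 := Complex.ofReal_eq_zero.1 hx2
  simpa [(hpos x).ne'] using hx3

/-- Hermite expansion in the Schwartz space. -/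
lemma hermite_hasSum (hh : ∀ β x, h β x = hermiteFunMulti d β x)
    (f : 𝓢(EuclideanSpace ℝ (Fin d), ℝ)) :
    HasSum (fun γ => coefCLM h γ f • h γ) f := by
  obtain ⟨g, hg⟩ := schwartz_summable (fun γ => coefCLM h γ f • h γ)
    (summable_coef_seminorm hh f)
  have hc : ∀ α, coefCLM h α g = coefCLM h α f := by
    intro α
    have h1 := hg.mapL (coefCLM h α)
    have h2 : ∀ γ, coefCLM h α (coefCLM h γ f • h γ) = if γ = α then coefCLM h α f else 0 := by
      intro γ
      rw [map_smul, coefCLM_apply (f := h γ)]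
      simp_rw [hh]
      rw [hermiteFunMulti_orth]
      by_cases e : α = γ
      · subst e; simp
      · simp [e, Ne.symm e]
    simp_rw [h2] at h1
    exact h1.unique (hasSum_ite_eq α _)
  have : f - g = 0 := hermite_total hh _ fun γ => by rw [map_sub, hc, sub_self]
  rw [sub_eq_zero.1 this]
  rwa [← sub_eq_zero.1 this] at hg ⊢

end


/-- The Hermite regularization of a tempered distribution commutes with
translation up to association: the family `T(h_γ)·∫ h_γ(y) φ(y+x) dy` is
absolutely summable with sum `T(τ_{-x} φ)`. -/
theorem hermite_regularization_translation (d : ℕ)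
    (h : (Fin d → ℕ) → SchwartzMap (EuclideanSpace ℝ (Fin d)) ℝ)
    (hh : ∀ β x, h β x = hermiteFunMulti d β x)
    (T : SchwartzMap (EuclideanSpace ℝ (Fin d)) ℝ →L[ℝ] ℝ)
    (x : EuclideanSpace ℝ (Fin d))
    (φ ψ : SchwartzMap (EuclideanSpace ℝ (Fin d)) ℝ)
    (hψ : ∀ y, ψ y = φ (y + x)) :
    Summable (fun γ : Fin d → ℕ =>
      |T (h γ) * ∫ y, hermiteFunMulti d γ y * φ (y + x)|) ∧
    ∑' γ : Fin d → ℕ, T (h γ) * (∫ y, hermiteFunMulti d γ y * φ (y + x)) = T ψ := by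
  have key := (hermite_hasSum hh ψ).mapL T
  have e : ∀ γ, T (coefCLM h γ ψ • h γ)
      = T (h γ) * ∫ y, hermiteFunMulti d γ y * φ (y + x) := by
    intro γ
    rw [map_smul, smul_eq_mul, mul_comm, coefCLM_apply]
    simp_rw [hh, hψ]
  simp_rw [e] at key
  exact ⟨key.summable.abs, key.tsum_eq⟩
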